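/- Under the algorithmic setting and local assumptions below, the whole sequence {x^k} converges to x*, and {‖r(x^k)‖} converges to 0 with convergence order ρ := min{1 + τ, δ + q} > 1; more precisely, there exist a constant C > 0 and an index k₀ such that for all k ≥ k₀, ‖r(x^{k+1})‖ ≤ C·‖r(x^k)‖^ρ and ‖r(x^k)‖ → 0. -/

import Mathlib

open scoped RealInnerProductSpace
open Filter Metric

noncomputable section

/-- The convex subdifferential of `g` at `y`. -/
def subdiff {n : ℕ} (g : EuclideanSpace ℝ (Fin n) → ℝ) (y : EuclideanSpace ℝ (Fin n)) :
    Set (EuclideanSpace ℝ (Fin n)) :=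
  {v | ∀ z, g y + ⟪v, z - y⟫ ≤ g z}

/-- The proximity operator `prox_g(z)`, the (unique, for convex `g`) minimizer of
`y ↦ g y + (1/2)‖y − z‖²`. -/
noncomputable def proxPt {n : ℕ} (g : EuclideanSpace ℝ (Fin n) → ℝ)
    (z : EuclideanSpace ℝ (Fin n)) : EuclideanSpace ℝ (Fin n) :=
  Classical.epsilon fun p => ∀ y, g p + (1 / 2) * ‖p - z‖ ^ 2 ≤ g y + (1 / 2) * ‖y - z‖ ^ 2

/-- The residual (prox-gradient) mapping `r(x) = x − prox_φ(x − ∇f(x))`. -/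
noncomputable def resid {n : ℕ} (f φ : EuclideanSpace ℝ (Fin n) → ℝ)
    (x : EuclideanSpace ℝ (Fin n)) : EuclideanSpace ℝ (Fin n) :=
  x - proxPt φ (x - gradient f x)

/-- The smallest eigenvalue of a symmetric operator on ℝᵐ, as the infimum of its quadratic
form over the unit sphere. -/
noncomputable def lambdaMin {m : ℕ} (T : EuclideanSpace ℝ (Fin m) →L[ℝ] EuclideanSpace ℝ (Fin m)) :
    ℝ :=
  ⨅ u : {u : EuclideanSpace ℝ (Fin m) // ‖u‖ = 1}, ⟪T u.1, u.1⟫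

theorem phi_cont {n : ℕ} {φ : EuclideanSpace ℝ (Fin n) → ℝ} (hφ : ConvexOn ℝ Set.univ φ) :
    Continuous φ := by
  rw [← continuousOn_univ]
  exact hφ.continuousOn isOpen_univ

theorem prox_exists {n : ℕ} {φ : EuclideanSpace ℝ (Fin n) → ℝ} (hφ : ConvexOn ℝ Set.univ φ)
    (z : EuclideanSpace ℝ (Fin n)) :
    ∃ p, ∀ y, φ p + (1 / 2) * ‖p - z‖ ^ 2 ≤ φ y + (1 / 2) * ‖y - z‖ ^ 2 := by
  have hc := phi_cont hφ
  have hc2 : Continuous fun y => φ y + (1 / 2) * ‖y - z‖ ^ 2 := by fun_prop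
  obtain ⟨u, hu, hmin⟩ := (isCompact_closedBall z 1).exists_isMinOn
    ⟨z, mem_closedBall_self zero_le_one⟩ hc.continuousOn
  set m := |φ u| with hm
  set T := 1 + 2 * (m + |φ z|) with hT
  have hT1 : 1 ≤ T := by have := abs_nonneg (φ u); have := abs_nonneg (φ z); linarith
  obtain ⟨p, hp, hpmin⟩ := (isCompact_closedBall z T).exists_isMinOn
    ⟨z, mem_closedBall_self (by linarith)⟩ hc2.continuousOn
  refine ⟨p, fun y => ?_⟩
  by_cases hy : y ∈ closedBall z T
  · exact hpmin hy
  · have h1 : φ p + (1 / 2) * ‖p - z‖ ^ 2 ≤ φ z + (1 / 2) * ‖z - z‖ ^ 2 :=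
      hpmin (mem_closedBall_self (by linarith))
    simp only [sub_self, norm_zero] at h1
    set t := ‖y - z‖ with ht
    have hty : T < t := by simpa [dist_eq_norm] using hy
    have ht0 : 0 < t := by linarith
    have hpp : z + (1 / t) • (y - z) ∈ closedBall z 1 := by
      rw [mem_closedBall, dist_eq_norm, add_sub_cancel_left, norm_smul, ← ht, Real.norm_of_nonneg (by positivity)]
      field_simp
      rfl
    have h2 : φ u ≤ φ (z + (1 / t) • (y - z)) := hmin hpp
    have h3 : φ ((1 - 1 / t) • z + (1 / t) • y) ≤ (1 - 1 / t) • φ z + (1 / t) • φ y := by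
      apply hφ.2 (Set.mem_univ _) (Set.mem_univ _)
      · rw [sub_nonneg, div_le_one ht0]; linarith
      · positivity
      · ring
    have h4 : (1 - 1 / t) • z + (1 / t) • y = z + (1 / t) • (y - z) := by module
    rw [h4] at h3
    simp only [smul_eq_mul] at h3
    have h5 : t * φ u ≤ (t - 1) * φ z + φ y := by
      calc t * φ u ≤ t * ((1 - 1 / t) * φ z + (1 / t) * φ y) := by
            apply mul_le_mul_of_nonneg_left (h2.trans h3) ht0.le
        _ = _ := by field_simp
    have h6 : -m ≤ φ u := neg_abs_le _
    have h7 : φ z ≤ |φ z| := le_abs_self _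
    nlinarith

theorem prox_spec {n : ℕ} {φ : EuclideanSpace ℝ (Fin n) → ℝ} (hφ : ConvexOn ℝ Set.univ φ)
    (z : EuclideanSpace ℝ (Fin n)) :
    z - proxPt φ z ∈ subdiff φ (proxPt φ z) := by
  have hmin : ∀ y, φ (proxPt φ z) + (1 / 2) * ‖proxPt φ z - z‖ ^ 2 ≤ φ y + (1 / 2) * ‖y - z‖ ^ 2 :=
    Classical.epsilon_spec (prox_exists hφ z)
  set p := proxPt φ z
  intro y
  have key : ∀ s : ℝ, 0 < s → s ≤ 1 →
      φ p + ⟪z - p, y - p⟫ ≤ φ y + s * ((1 / 2) * ‖y - p‖ ^ 2) := by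
    intro s hs hs1
    have h1 := hmin (p + s • (y - p))
    have h2 : φ ((1 - s) • p + s • y) ≤ (1 - s) • φ p + s • φ y :=
      hφ.2 (Set.mem_univ _) (Set.mem_univ _) (by linarith) hs.le (by ring)
    have h3 : (1 - s) • p + s • y = p + s • (y - p) := by module
    rw [h3] at h2
    simp only [smul_eq_mul] at h2
    have h4 : ‖p + s • (y - p) - z‖ ^ 2 = ‖p - z‖ ^ 2 - 2 * s * ⟪z - p, y - p⟫ + s ^ 2 * ‖y - p‖ ^ 2 := by
      have : p + s • (y - p) - z = (p - z) + s • (y - p) := by abel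
      rw [this, norm_add_sq_real, real_inner_smul_right, norm_smul, mul_pow, Real.norm_eq_abs, sq_abs,
        ← neg_sub z p, inner_neg_left]
      rw [norm_neg]; ring
    rw [h4] at h1
    have h5 : s * (φ p + ⟪z - p, y - p⟫) ≤ s * (φ y + s * ((1 / 2) * ‖y - p‖ ^ 2)) := by nlinarith
    exact le_of_mul_le_mul_left h5 hs
  have hlim : Tendsto (fun s : ℝ => φ y + s * ((1 / 2) * ‖y - p‖ ^ 2)) (nhdsWithin 0 (Set.Ioi 0)) (nhds (φ y)) := by
    have : Tendsto (fun s : ℝ => φ y + s * ((1 / 2) * ‖y - p‖ ^ 2)) (nhds 0) (nhds (φ y + 0 * ((1 / 2) * ‖y - p‖ ^ 2))) := by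
      apply Continuous.tendsto; fun_prop
    rw [zero_mul, add_zero] at this
    exact this.mono_left nhdsWithin_le_nhds
  refine ge_of_tendsto hlim ?_
  filter_upwards [Ioc_mem_nhdsGT (zero_lt_one' ℝ)] with s hs using key s hs.1 hs.2

theorem subdiff_mono {n : ℕ} {φ : EuclideanSpace ℝ (Fin n) → ℝ} {p q u v : EuclideanSpace ℝ (Fin n)}
    (hu : u ∈ subdiff φ p) (hv : v ∈ subdiff φ q) : 0 ≤ ⟪u - v, p - q⟫ := by
  have h1 := hu q
  have h2 := hv p
  have h3 : ⟪u, q - p⟫ = -⟪u, p - q⟫ := by rw [← inner_neg_right, neg_sub]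
  rw [inner_sub_left]
  linarith

theorem prox_nonexp {n : ℕ} {φ : EuclideanSpace ℝ (Fin n) → ℝ} (hφ : ConvexOn ℝ Set.univ φ)
    (z w : EuclideanSpace ℝ (Fin n)) : ‖proxPt φ z - proxPt φ w‖ ≤ ‖z - w‖ := by
  have h := subdiff_mono (prox_spec hφ z) (prox_spec hφ w)
  set p := proxPt φ z
  set q := proxPt φ w
  have h1 : z - p - (w - q) = (z - w) - (p - q) := by abel
  rw [h1, inner_sub_left, real_inner_self_eq_norm_sq] at h
  have h2 := real_inner_le_norm (z - w) (p - q)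
  by_contra hc
  push Not at hc
  nlinarith [norm_nonneg (p - q), norm_nonneg (z - w)]

theorem resid_stat {n : ℕ} {f φ : EuclideanSpace ℝ (Fin n) → ℝ} (hφ : ConvexOn ℝ Set.univ φ)
    {y : EuclideanSpace ℝ (Fin n)} (hy : -gradient f y ∈ subdiff φ y) : resid f φ y = 0 := by
  have h := subdiff_mono (prox_spec hφ (y - gradient f y)) hy
  unfold resid
  set p := proxPt φ (y - gradient f y)
  have h1 : y - gradient f y - p - -gradient f y = - (p - y) := by abel
  rw [h1, inner_neg_left, real_inner_self_eq_norm_sq] at h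
  have : ‖p - y‖ = 0 := by nlinarith [norm_nonneg (p - y)]
  rw [norm_eq_zero, sub_eq_zero] at this
  rw [this, sub_self]

theorem gradpsi_contDiff {m : ℕ} {ψ : EuclideanSpace ℝ (Fin m) → ℝ} (hψ : ContDiff ℝ 2 ψ) :
    ContDiff ℝ 1 (gradient ψ) := by
  have h : ContDiff ℝ 1 (fderiv ℝ ψ) := hψ.fderiv_right (by norm_num)
  have h2 : gradient ψ = fun y => (InnerProductSpace.toDual ℝ (EuclideanSpace ℝ (Fin m))).symm (fderiv ℝ ψ y) := rfl
  rw [h2]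
  exact (InnerProductSpace.toDual ℝ (EuclideanSpace ℝ (Fin m))).symm.toContinuousLinearEquiv.contDiff.comp h

theorem grad_comp {n m : ℕ} {ψ : EuclideanSpace ℝ (Fin m) → ℝ} (hψ : ContDiff ℝ 2 ψ)
    {A : EuclideanSpace ℝ (Fin n) →L[ℝ] EuclideanSpace ℝ (Fin m)} {b : EuclideanSpace ℝ (Fin m)}
    {f : EuclideanSpace ℝ (Fin n) → ℝ} (hf : ∀ y, f y = ψ (A y - b)) (y : EuclideanSpace ℝ (Fin n)) :
    HasGradientAt f (ContinuousLinearMap.adjoint A (gradient ψ (A y - b))) y := by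
  have hd : DifferentiableAt ℝ ψ (A y - b) := (hψ.differentiable (by norm_num)) _
  have h1 : HasFDerivAt ψ _ (A y - b) := hd.hasGradientAt.hasFDerivAt
  have h2 : HasFDerivAt (fun y => A y - b) A y := A.hasFDerivAt.sub_const b
  have h3 := h1.comp y h2
  have hfe : f = ψ ∘ (fun y => A y - b) := funext hf
  rw [hasGradientAt_iff_hasFDerivAt, hfe]
  have e : (InnerProductSpace.toDual ℝ (EuclideanSpace ℝ (Fin n)))
      ((ContinuousLinearMap.adjoint A) (gradient ψ (A y - b))) =
      ((InnerProductSpace.toDual ℝ (EuclideanSpace ℝ (Fin m))) (gradient ψ (A y - b))).comp A := by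
    apply ContinuousLinearMap.ext
    intro v
    simp [ContinuousLinearMap.adjoint_inner_left]
  rw [e]
  exact h3

theorem hess_comp {n m : ℕ} {ψ : EuclideanSpace ℝ (Fin m) → ℝ} (hψ : ContDiff ℝ 2 ψ)
    {A : EuclideanSpace ℝ (Fin n) →L[ℝ] EuclideanSpace ℝ (Fin m)} {b : EuclideanSpace ℝ (Fin m)}
    {f : EuclideanSpace ℝ (Fin n) → ℝ} (hf : ∀ y, f y = ψ (A y - b)) (y : EuclideanSpace ℝ (Fin n)) :
    HasFDerivAt (gradient f) ((ContinuousLinearMap.adjoint A).comp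
      ((fderiv ℝ (gradient ψ) (A y - b)).comp A)) y := by
  have hg : gradient f = fun y => ContinuousLinearMap.adjoint A (gradient ψ (A y - b)) :=
    funext fun y => (grad_comp hψ hf y).gradient
  rw [hg]
  have h1 : HasFDerivAt (gradient ψ) (fderiv ℝ (gradient ψ) (A y - b)) (A y - b) :=
    (((gradpsi_contDiff hψ).differentiable (by norm_num)) _).hasFDerivAt
  have h2 : HasFDerivAt (fun y => A y - b) A y := A.hasFDerivAt.sub_const b
  have h3 := HasFDerivAt.comp y h1 h2
  exact HasFDerivAt.comp y (ContinuousLinearMap.adjoint A).hasFDerivAt h3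

theorem lambdaMin_le {m : ℕ} (T : EuclideanSpace ℝ (Fin m) →L[ℝ] EuclideanSpace ℝ (Fin m))
    (u : EuclideanSpace ℝ (Fin m)) : lambdaMin T * ‖u‖ ^ 2 ≤ ⟪T u, u⟫ := by
  by_cases hu : u = 0
  · simp [hu]
  have hn : 0 < ‖u‖ := norm_pos_iff.mpr hu
  have hb : BddBelow (Set.range fun u : {u : EuclideanSpace ℝ (Fin m) // ‖u‖ = 1} => ⟪T u.1, u.1⟫) := by
    refine ⟨-‖T‖, ?_⟩
    rintro _ ⟨⟨v, hv⟩, rfl⟩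
    have h1 := abs_real_inner_le_norm (T v) v
    have h2 := T.le_opNorm v
    rw [hv] at h1 h2
    have := neg_abs_le (⟪T v, v⟫)
    simp only
    linarith
  have h := ciInf_le hb ⟨‖u‖⁻¹ • u, by
    rw [norm_smul, norm_inv, norm_norm, inv_mul_cancel₀ hn.ne']⟩
  simp only [map_smul, real_inner_smul_left, real_inner_smul_right] at h
  calc lambdaMin T * ‖u‖ ^ 2 ≤ (‖u‖⁻¹ * (‖u‖⁻¹ * ⟪T u, u⟫)) * ‖u‖ ^ 2 :=
        mul_le_mul_of_nonneg_right h (by positivity)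
    _ = _ := by field_simp

theorem neg_lambdaMin_le {m : ℕ} (T S : EuclideanSpace ℝ (Fin m) →L[ℝ] EuclideanSpace ℝ (Fin m))
    (hS : ∀ u, 0 ≤ ⟪S u, u⟫) : -lambdaMin T ≤ ‖T - S‖ := by
  unfold lambdaMin
  rcases isEmpty_or_nonempty {u : EuclideanSpace ℝ (Fin m) // ‖u‖ = 1} with he | hne
  · rw [Real.iInf_of_isEmpty]; simp
  · rw [neg_le]
    refine le_ciInf fun ⟨v, hv⟩ => ?_
    have h1 := abs_real_inner_le_norm ((T - S) v) v
    have h2 := (T - S).le_opNorm v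
    rw [hv] at h1 h2
    have h3 := neg_abs_le (⟪(T - S) v, v⟫)
    have h4 := hS v
    rw [sub_apply, inner_sub_left] at h1 h3
    rw [sub_apply] at h2
    simp only
    linarith

theorem taylor_grad {n : ℕ} {g : EuclideanSpace ℝ (Fin n) → EuclideanSpace ℝ (Fin n)}
    {H : EuclideanSpace ℝ (Fin n) → EuclideanSpace ℝ (Fin n) →L[ℝ] EuclideanSpace ℝ (Fin n)}
    (hH : ∀ y, HasFDerivAt g (H y) y) {c : EuclideanSpace ℝ (Fin n)} {ε L : ℝ} (hL : 0 ≤ L)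
    (hlip : ∀ u ∈ closedBall c ε, ∀ v ∈ closedBall c ε, ‖H u - H v‖ ≤ L * ‖u - v‖)
    {u v : EuclideanSpace ℝ (Fin n)} (hu : u ∈ closedBall c ε) (hv : v ∈ closedBall c ε) :
    ‖g v - g u - H u (v - u)‖ ≤ L * ‖v - u‖ ^ 2 := by
  have hseg : segment ℝ u v ⊆ closedBall c ε := (convex_closedBall c ε).segment_subset hu hv
  have := (convex_segment u v).norm_image_sub_le_of_norm_hasFDerivWithin_le' (f := g) (f' := H)
    (φ := H u) (C := L * ‖v - u‖) (fun y _ => (hH y).hasFDerivWithinAt) (fun y hy => by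
      refine (hlip y (hseg hy) u hu).trans ?_
      gcongr
      have := norm_sub_le_of_mem_segment hy
      simpa [norm_sub_rev] using this) (left_mem_segment ℝ u v) (right_mem_segment ℝ u v)
  calc _ ≤ _ := this
    _ = _ := by ring

theorem taylor_fun {n : ℕ} {f : EuclideanSpace ℝ (Fin n) → ℝ}
    (hf : ∀ y, HasGradientAt f (gradient f y) y)
    {H : EuclideanSpace ℝ (Fin n) → EuclideanSpace ℝ (Fin n) →L[ℝ] EuclideanSpace ℝ (Fin n)}
    (hH : ∀ y, HasFDerivAt (gradient f) (H y) y) {c : EuclideanSpace ℝ (Fin n)} {ε L : ℝ} (hL : 0 ≤ L)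
    (hlip : ∀ u ∈ closedBall c ε, ∀ v ∈ closedBall c ε, ‖H u - H v‖ ≤ L * ‖u - v‖)
    {u v : EuclideanSpace ℝ (Fin n)} (hu : u ∈ closedBall c ε) (hv : v ∈ closedBall c ε) :
    |f v - (f u + ⟪gradient f u, v - u⟫ + (1 / 2) * ⟪v - u, H u (v - u)⟫)| ≤ L * ‖v - u‖ ^ 3 := by
  set d := v - u with hd
  set h : ℝ → ℝ := fun t => f (u + t • d) - t * ⟪gradient f u, d⟫ - t ^ 2 * ((1 / 2) * ⟪d, H u d⟫) with hh
  have hder : ∀ t : ℝ, HasDerivAt h (⟪gradient f (u + t • d) - gradient f u - H u (t • d), d⟫) t := by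
    intro t
    have h1 : HasDerivAt (fun t : ℝ => u + t • d) d t := by
      simpa using ((hasDerivAt_id t).smul_const d).const_add u
    have h2 := ((hf (u + t • d)).hasFDerivAt).comp_hasDerivAt t h1
    have h3 := (h2.sub ((hasDerivAt_id t).mul_const (⟪gradient f u, d⟫))).sub
      ((hasDerivAt_pow 2 t).mul_const ((1 / 2) * ⟪d, H u d⟫))
    refine HasDerivAt.congr_deriv h3 ?_
    simp only [map_smul, inner_sub_left, real_inner_smul_left, InnerProductSpace.toDual_apply_apply, real_inner_comm d (H u d)]
    push_cast
    ring
  have hb := norm_image_sub_le_of_norm_deriv_le_segment_01' (f := h)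
    (f' := fun t => ⟪gradient f (u + t • d) - gradient f u - H u (t • d), d⟫) (C := L * ‖d‖ ^ 3)
    (fun t _ => (hder t).hasDerivWithinAt) (fun t ht => by
      have hmem : u + t • d ∈ closedBall c ε := by
        have := (convex_closedBall c ε).add_smul_sub_mem hu hv (t := t) ⟨ht.1, ht.2.le⟩
        simpa [hd] using this
      have h1 := taylor_grad hH hL hlip hu hmem
      rw [add_sub_cancel_left] at h1
      rw [Real.norm_eq_abs]
      have h2 := abs_real_inner_le_norm (gradient f (u + t • d) - gradient f u - H u (t • d)) d
      have h3 : ‖t • d‖ ≤ ‖d‖ := by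
        rw [norm_smul, Real.norm_of_nonneg ht.1]
        exact mul_le_of_le_one_left (norm_nonneg _) ht.2.le
      calc _ ≤ _ := h2
        _ ≤ (L * ‖d‖ ^ 2) * ‖d‖ := by
          gcongr
          refine h1.trans ?_
          gcongr
        _ = _ := by ring)
  rw [Real.norm_eq_abs] at hb
  convert hb using 2
  simp only [hh, hd]
  simp
  ring

theorem w_bound {n : ℕ} {φ : EuclideanSpace ℝ (Fin n) → ℝ} (hφ : ConvexOn ℝ Set.univ φ)
    {x xb xh gx gb e : EuclideanSpace ℝ (Fin n)}
    {Hx P G : EuclideanSpace ℝ (Fin n) →L[ℝ] EuclideanSpace ℝ (Fin n)} {μ : ℝ} (hμ : 0 ≤ μ)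
    (hG : G = Hx + P + μ • ContinuousLinearMap.id ℝ (EuclideanSpace ℝ (Fin n)))
    (he : e = xh - proxPt φ (xh - gx - G (xh - x)))
    (hgb : -gb ∈ subdiff φ xb) (hpsd : ∀ v, 0 ≤ ⟪(Hx + P) v, v⟫) :
    μ * ‖xh - e - xb‖ ≤ ‖e‖ + ‖G e‖ + ‖gb - gx - Hx (xb - x)‖ + (‖P‖ + μ) * ‖xb - x‖ := by
  have h := subdiff_mono (prox_spec hφ (xh - gx - G (xh - x))) hgb
  have hp : proxPt φ (xh - gx - G (xh - x)) = xh - e := by rw [he]; abel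
  rw [hp] at h
  set w := xh - e - xb with hw
  have h1 : xh - gx - G (xh - x) - (xh - e) - -gb =
      (e - G e + (gb - gx - Hx (xb - x)) - P (xb - x) - μ • (xb - x)) - ((Hx + P) w + μ • w) := by
    have h2 : xh - x = w + e + (xb - x) := by rw [hw]; abel
    have h3 : G (w + e + (xb - x)) = (Hx + P) w + μ • w + G e + (Hx (xb - x) + P (xb - x) + μ • (xb - x)) := by
      rw [map_add, map_add]
      simp only [hG, add_apply, smul_apply, ContinuousLinearMap.id_apply]
    rw [h2, h3]
    abel
  rw [h1, inner_sub_left, inner_add_left ((Hx + P) w), real_inner_smul_left, real_inner_self_eq_norm_sq] at h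
  have h4 := hpsd w
  have h5 := real_inner_le_norm (e - G e + (gb - gx - Hx (xb - x)) - P (xb - x) - μ • (xb - x)) w
  set N := e - G e + (gb - gx - Hx (xb - x)) - P (xb - x) - μ • (xb - x) with hN
  have h6 : ‖N‖ ≤ ‖e‖ + ‖G e‖ + ‖gb - gx - Hx (xb - x)‖ + (‖P‖ + μ) * ‖xb - x‖ := by
    have a1 := norm_sub_le (e - G e + (gb - gx - Hx (xb - x)) - P (xb - x)) (μ • (xb - x))
    have a2 := norm_sub_le (e - G e + (gb - gx - Hx (xb - x))) (P (xb - x))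
    have a3 := norm_add_le (e - G e) (gb - gx - Hx (xb - x))
    have a4 := norm_sub_le e (G e)
    have a5 := P.le_opNorm (xb - x)
    rw [norm_smul, Real.norm_of_nonneg hμ] at a1
    linarith
  refine le_trans ?_ h6
  by_cases hw0 : ‖w‖ = 0
  · rw [hw0, mul_zero]; exact norm_nonneg _
  · have hwp : 0 < ‖w‖ := lt_of_le_of_ne (norm_nonneg _) (Ne.symm hw0)
    have : (μ * ‖w‖) * ‖w‖ ≤ ‖N‖ * ‖w‖ := by nlinarith
    exact le_of_mul_le_mul_right this hwp

set_option maxHeartbeats 4000000 in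
theorem core_step {n : ℕ} {f φ : EuclideanSpace ℝ (Fin n) → ℝ} (hφ : ConvexOn ℝ Set.univ φ)
    (hf : ∀ y, HasGradientAt f (gradient f y) y)
    {H : EuclideanSpace ℝ (Fin n) → EuclideanSpace ℝ (Fin n) →L[ℝ] EuclideanSpace ℝ (Fin n)}
    (hH : ∀ y, HasFDerivAt (gradient f) (H y) y) {xs : EuclideanSpace ℝ (Fin n)} {ε L : ℝ}
    (hε : 0 < ε) (hL : 0 ≤ L)
    (hlip : ∀ u ∈ closedBall xs ε, ∀ v ∈ closedBall xs ε, ‖H u - H v‖ ≤ L * ‖u - v‖)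
    {S : Set (EuclideanSpace ℝ (Fin n))} (hS : ∀ y ∈ S, -gradient f y ∈ subdiff φ y) (hxs : xs ∈ S)
    {β q δ τ νmin νbar θ cP : ℝ} (hβ : 0 < β) (hδ : 0 < δ) (hq : δ < q) (hτ : δ ≤ τ)
    (hνmin : 0 < νmin) (hνbar : νmin ≤ νbar) (hθ : 0 < θ) (hθ1 : θ < 1) (hcP : 0 ≤ cP)
    (herr : ∀ y ∈ closedBall xs ε, β * infDist y S ≤ ‖resid f φ y‖ ^ q) :
    (∃ K0 > 0, ∀ y ∈ closedBall xs ε, ‖resid f φ y‖ ≤ K0 * ‖y - xs‖) ∧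
    ∃ C > 0, ∀ᶠ x in nhds xs, resid f φ x ≠ 0 → ∀ xh P G μ,
      G = H x + P + μ • ContinuousLinearMap.id ℝ (EuclideanSpace ℝ (Fin n)) →
      (∀ xb ∈ S, xb ∈ closedBall xs ε → ‖P‖ ≤ cP * ‖x - xb‖) →
      (∀ v, 0 ≤ ⟪(H x + P) v, v⟫) →
      νmin * ‖resid f φ x‖ ^ δ ≤ μ → μ ≤ νbar * ‖resid f φ x‖ ^ δ →
      ‖xh - proxPt φ (xh - gradient f x - G (xh - x))‖ ≤
        θ * min ‖resid f φ x‖ (‖resid f φ x‖ ^ (1 + τ)) →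
      ‖xh - x‖ ≤ C * ‖resid f φ x‖ ^ q ∧
      (1 - θ) * ‖resid f φ x‖ ≤ C * ‖xh - x‖ ∧
      ‖resid f φ xh‖ ≤ C * ‖resid f φ x‖ ^ min (1 + τ) (δ + q) ∧
      |f xh - (f x + ⟪gradient f x, xh - x⟫ + (1 / 2) * ⟪xh - x, H x (xh - x)⟫)| ≤ L * ‖xh - x‖ ^ 3 := by
  have hxsb : xs ∈ closedBall xs ε := mem_closedBall_self hε.le
  obtain ⟨M, hM⟩ : ∃ M, M = ‖H xs‖ + L * ε := ⟨_, rfl⟩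
  have hM0 : 0 ≤ M := by rw [hM]; positivity
  have hHM : ∀ y ∈ closedBall xs ε, ‖H y‖ ≤ M := by
    intro y hy
    have h1 := hlip y hy xs hxsb
    have h2 : ‖H y‖ ≤ ‖H xs‖ + ‖H y - H xs‖ := by
      simpa using norm_add_le (H xs) (H y - H xs)
    have h3 : ‖y - xs‖ ≤ ε := by simpa [dist_eq_norm] using hy
    have : L * ‖y - xs‖ ≤ L * ε := by gcongr
    linarith
  have hgl : ∀ u ∈ closedBall xs ε, ∀ v ∈ closedBall xs ε,
      ‖gradient f u - gradient f v‖ ≤ M * ‖u - v‖ := fun u hu v hv =>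
    (convex_closedBall xs ε).norm_image_sub_le_of_norm_hasFDerivWithin_le
      (fun y _ => (hH y).hasFDerivWithinAt) hHM hv hu
  obtain ⟨K0, hK0⟩ : ∃ K0, K0 = 2 + M := ⟨_, rfl⟩
  have hK0p : 0 < K0 := by linarith
  have hrs : ∀ xb ∈ S, xb ∈ closedBall xs ε → ∀ y ∈ closedBall xs ε,
      ‖resid f φ y‖ ≤ K0 * ‖y - xb‖ := by
    intro xb hxb hb y hy
    have h0 := resid_stat hφ (hS xb hxb)
    have h1 : resid f φ y = (y - xb) - (proxPt φ (y - gradient f y) - proxPt φ (xb - gradient f xb)) := by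
      have : resid f φ y = resid f φ y - resid f φ xb := by rw [h0, sub_zero]
      rw [this]; unfold resid; abel
    have h2 := prox_nonexp hφ (y - gradient f y) (xb - gradient f xb)
    have h3 : y - gradient f y - (xb - gradient f xb) = (y - xb) - (gradient f y - gradient f xb) := by abel
    rw [h3] at h2
    have h4 := norm_sub_le (y - xb) (gradient f y - gradient f xb)
    have h5 := hgl y hy xb hb
    have h6 := norm_sub_le (y - xb) (proxPt φ (y - gradient f y) - proxPt φ (xb - gradient f xb))
    rw [← h1] at h6
    rw [hK0]
    linarith
  refine ⟨⟨K0, hK0p, hrs xs hxs hxsb⟩, ?_⟩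
  have hr0 : Tendsto (fun y => ‖resid f φ y‖) (nhds xs) (nhds 0) := by
    have h1 : Tendsto (fun y => K0 * ‖y - xs‖) (nhds xs) (nhds 0) := by
      have : Continuous fun y => K0 * ‖y - xs‖ := by fun_prop
      simpa using this.tendsto xs
    refine squeeze_zero' (Eventually.of_forall fun _ => norm_nonneg _) ?_ h1
    filter_upwards [closedBall_mem_nhds xs hε] with y hy using hrs xs hxs hxsb y hy
  have hq0 : 0 < q := by linarith
  have hrq : Tendsto (fun y => ‖resid f φ y‖ ^ q) (nhds xs) (nhds 0) := by
    have := hr0.rpow_const (p := q) (Or.inr hq0.le)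
    rwa [Real.zero_rpow hq0.ne'] at this
  obtain ⟨D, hD⟩ : ∃ D, D = 1 / β + 1 := ⟨_, rfl⟩
  have hDp : 0 < D := by rw [hD]; positivity
  have hνb : 0 < νbar := by linarith
  obtain ⟨MG, hMG⟩ : ∃ MG, MG = M + cP * ε + νbar := ⟨_, rfl⟩
  have hMGp : 0 < MG := by rw [hMG]; positivity
  obtain ⟨C1, hC1⟩ : ∃ C1, C1 = (1 + MG) * K0 * D + L * D ^ 2 + cP * D ^ 2 + νbar * D := ⟨_, rfl⟩
  have hC1p : 0 < C1 := by rw [hC1]; positivity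
  obtain ⟨C2, hC2⟩ : ∃ C2, C2 = C1 / νmin + K0 * D + D := ⟨_, rfl⟩
  have hC2p : 0 < C2 := by rw [hC2]; positivity
  obtain ⟨C3, hC3⟩ : ∃ C3, C3 = 1 + L * C2 ^ 2 + cP * D * C2 + νbar * C2 := ⟨_, rfl⟩
  have hC3p : 0 < C3 := by rw [hC3]; positivity
  refine ⟨C2 + (2 + MG) + C3, by positivity, ?_⟩
  have ev1 : ∀ᶠ y in nhds xs, ‖resid f φ y‖ < 1 := hr0.eventually_lt_const one_pos
  have ev2 : ∀ᶠ y in nhds xs, ‖resid f φ y‖ ^ q < ε / 2 / D := hrq.eventually_lt_const (by positivity)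
  have ev3 : ∀ᶠ y in nhds xs, ‖resid f φ y‖ ^ q < ε / 2 / C2 := hrq.eventually_lt_const (by positivity)
  filter_upwards [ev1, ev2, ev3, closedBall_mem_nhds xs (half_pos hε)] with x hx1 hx2 hx3 hx4
  intro hne xh P G μ hG hP hpsd hμ1 hμ2 hR
  have hxb0 : ‖x - xs‖ ≤ ε / 2 := by simpa [dist_eq_norm] using hx4
  have hxball : x ∈ closedBall xs ε := closedBall_subset_closedBall (by linarith) hx4
  set r := ‖resid f φ x‖ with hr
  have hrp : 0 < r := norm_pos_iff.mpr hne
  set t := r ^ q with ht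
  set s := r ^ δ with hs
  have htp : 0 < t := Real.rpow_pos_of_pos hrp q
  have hsp : 0 < s := Real.rpow_pos_of_pos hrp δ
  have hs1 : s ≤ 1 := Real.rpow_le_one hrp.le hx1.le hδ.le
  have hts : t ≤ s := Real.rpow_le_rpow_of_exponent_ge hrp hx1.le hq.le
  have hrs1 : r ^ (1 + τ) ≤ r * s := by
    have : r * s = r ^ (1 + δ) := by rw [Real.rpow_add hrp, Real.rpow_one]
    rw [this]
    exact Real.rpow_le_rpow_of_exponent_ge hrp hx1.le (by linarith)
  have hts2 : t * s ≤ r ^ min (1 + τ) (δ + q) := by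
    have : t * s = r ^ (δ + q) := by rw [Real.rpow_add hrp, mul_comm]
    rw [this]
    exact Real.rpow_le_rpow_of_exponent_ge hrp hx1.le (min_le_right _ _)
  have hrτ : r ^ (1 + τ) ≤ r ^ min (1 + τ) (δ + q) :=
    Real.rpow_le_rpow_of_exponent_ge hrp hx1.le (min_le_left _ _)
  obtain ⟨xb, hxbS, hxbd⟩ : ∃ xb ∈ S, ‖x - xb‖ ≤ D * t := by
    have h1 := herr x hxball
    have h2 : infDist x S < infDist x S + t := by linarith
    obtain ⟨xb, hb, hd⟩ := (infDist_lt_iff ⟨xs, hxs⟩).mp h2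
    refine ⟨xb, hb, ?_⟩
    rw [dist_eq_norm] at hd
    have h3 : infDist x S ≤ t / β := by rw [le_div_iff₀ hβ]; linarith
    rw [hD]
    calc ‖x - xb‖ ≤ infDist x S + t := hd.le
      _ ≤ t / β + t := by linarith
      _ = _ := by ring
  have hDt : D * t ≤ ε / 2 := by
    have := (lt_div_iff₀ hDp).mp hx2
    linarith
  have hC2t : C2 * t ≤ ε / 2 := by
    have := (lt_div_iff₀ hC2p).mp hx3
    linarith
  have hxbb : xb ∈ closedBall xs ε := by
    rw [mem_closedBall, dist_eq_norm]
    have : xb - xs = (x - xs) - (x - xb) := by abel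
    rw [this]
    have := norm_sub_le (x - xs) (x - xb)
    linarith
  have hrt : r ≤ K0 * D * t := by
    have h1 := hrs xb hxbS hxbb x hxball
    have h2 : K0 * ‖x - xb‖ ≤ K0 * (D * t) := by gcongr
    linarith
  have hPb : ‖P‖ ≤ cP * (D * t) := (hP xb hxbS hxbb).trans (by gcongr)
  have hPe : ‖P‖ ≤ cP * ε := (hP xs hxs hxsb).trans (by gcongr; linarith)
  have hμp : 0 < μ := lt_of_lt_of_le (by positivity) hμ1
  have hμν : μ ≤ νbar := hμ2.trans (mul_le_of_le_one_right hνb.le hs1)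
  have hGv : ∀ v, ‖G v‖ ≤ MG * ‖v‖ := by
    intro v
    have : G v = H x v + P v + μ • v := by
      simp [hG]
    rw [this]
    have a1 := norm_add₃_le (a := H x v) (b := P v) (c := μ • v)
    have a2 := (H x).le_opNorm v
    have a3 := P.le_opNorm v
    rw [norm_smul, Real.norm_of_nonneg hμp.le] at a1
    have a4 := mul_le_mul_of_nonneg_right (hHM x hxball) (norm_nonneg v)
    have a5 := mul_le_mul_of_nonneg_right hPe (norm_nonneg v)
    have a6 := mul_le_mul_of_nonneg_right hμν (norm_nonneg v)
    rw [hMG]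
    linarith
  obtain ⟨e, he⟩ : ∃ e, e = xh - proxPt φ (xh - gradient f x - G (xh - x)) := ⟨_, rfl⟩
  rw [← he] at hR
  have hmr : min r (r ^ (1 + τ)) ≤ r := min_le_left _ _
  have hmr2 : min r (r ^ (1 + τ)) ≤ r ^ (1 + τ) := min_le_right _ _
  have hm0 : 0 ≤ min r (r ^ (1 + τ)) := le_min hrp.le (Real.rpow_nonneg hrp.le _)
  have heθ : ‖e‖ ≤ θ * r := hR.trans (by gcongr)
  have he1 : ‖e‖ ≤ r := heθ.trans (mul_le_of_le_one_left hrp.le hθ1.le)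
  have he2 : ‖e‖ ≤ r ^ (1 + τ) := hR.trans ((mul_le_of_le_one_left hm0 hθ1.le).trans hmr2)
  have het : ‖e‖ ≤ K0 * D * t * s := he2.trans (hrs1.trans (by gcongr))
  have hw := w_bound hφ hμp.le hG he (hS xb hxbS) hpsd
  have htay := taylor_grad hH hL hlip hxball hxbb
  have hnr : ‖xb - x‖ ≤ D * t := by rw [norm_sub_rev]; exact hxbd
  have htt : t * t ≤ t * s := by gcongr
  have hw2 : μ * ‖xh - e - xb‖ ≤ C1 * (t * s) := by
    refine hw.trans ?_
    have b1 : ‖e‖ + ‖G e‖ ≤ (1 + MG) * (K0 * D * t * s) := by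
      have := hGv e
      calc ‖e‖ + ‖G e‖ ≤ (1 + MG) * ‖e‖ := by linarith
        _ ≤ _ := by gcongr
    have b2 : L * ‖xb - x‖ ^ 2 ≤ L * D ^ 2 * (t * s) := by
      calc L * ‖xb - x‖ ^ 2 ≤ L * (D * t) ^ 2 := by gcongr
        _ = L * D ^ 2 * (t * t) := by ring
        _ ≤ _ := by gcongr
    have b3 : (‖P‖ + μ) * ‖xb - x‖ ≤ cP * D ^ 2 * (t * s) + νbar * D * (t * s) := by
      calc (‖P‖ + μ) * ‖xb - x‖ ≤ (cP * (D * t) + νbar * s) * (D * t) := by gcongr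
        _ = cP * D ^ 2 * (t * t) + νbar * D * (t * s) := by ring
        _ ≤ _ := by gcongr
    rw [hC1]
    linarith
  have hw3 : ‖xh - e - xb‖ ≤ C1 / νmin * t := by
    have h1 : νmin * s * ‖xh - e - xb‖ ≤ C1 * (t * s) := le_trans (by gcongr) hw2
    have h2 : s * (νmin * ‖xh - e - xb‖) ≤ s * (C1 * t) := by linarith
    have h3 := le_of_mul_le_mul_left h2 hsp
    rw [div_mul_eq_mul_div, le_div_iff₀ hνmin]
    linarith
  have hd : ‖xh - x‖ ≤ C2 * t := by
    have h1 : xh - x = (xh - e - xb) + e + (xb - x) := by abel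
    have h2 := norm_add₃_le (a := xh - e - xb) (b := e) (c := xb - x)
    rw [← h1] at h2
    rw [hC2]
    have : ‖e‖ ≤ K0 * D * t := he1.trans hrt
    linarith
  have hxhb : xh ∈ closedBall xs ε := by
    rw [mem_closedBall, dist_eq_norm]
    have : xh - xs = (xh - x) + (x - xs) := by abel
    rw [this]
    have := norm_add_le (xh - x) (x - xs)
    linarith
  refine ⟨?_, ?_, ?_, taylor_fun hf hH hL hlip hxball hxhb⟩
  · refine hd.trans ?_
    gcongr
    linarith
  · have h1 : resid f φ x = e - ((xh - x) - (proxPt φ (xh - gradient f x - G (xh - x)) - proxPt φ (x - gradient f x))) := by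
      rw [he]; unfold resid; abel
    have h2 := prox_nonexp hφ (xh - gradient f x - G (xh - x)) (x - gradient f x)
    have h3 : xh - gradient f x - G (xh - x) - (x - gradient f x) = (xh - x) - G (xh - x) := by abel
    rw [h3] at h2
    have h4 := norm_sub_le (xh - x) (G (xh - x))
    have h5 := hGv (xh - x)
    have h6 := norm_sub_le (xh - x) (proxPt φ (xh - gradient f x - G (xh - x)) - proxPt φ (x - gradient f x))
    have h7 := norm_sub_le e ((xh - x) - (proxPt φ (xh - gradient f x - G (xh - x)) - proxPt φ (x - gradient f x)))
    rw [← h1, ← hr] at h7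
    have h8 : (2 + MG) * ‖xh - x‖ ≤ (C2 + (2 + MG) + C3) * ‖xh - x‖ :=
      mul_le_mul_of_nonneg_right (by linarith) (norm_nonneg _)
    linarith
  · have h1 : resid f φ xh = e - (proxPt φ (xh - gradient f xh) - proxPt φ (xh - gradient f x - G (xh - x))) := by
      rw [he]; unfold resid; abel
    have h2 := prox_nonexp hφ (xh - gradient f xh) (xh - gradient f x - G (xh - x))
    have h3 : xh - gradient f xh - (xh - gradient f x - G (xh - x)) =
        P (xh - x) + μ • (xh - x) - (gradient f xh - gradient f x - H x (xh - x)) := by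
      have : G (xh - x) = H x (xh - x) + P (xh - x) + μ • (xh - x) := by simp [hG]
      rw [this]; abel
    rw [h3] at h2
    have h4 := norm_sub_le (P (xh - x) + μ • (xh - x)) (gradient f xh - gradient f x - H x (xh - x))
    have h5 := norm_add_le (P (xh - x)) (μ • (xh - x))
    rw [norm_smul, Real.norm_of_nonneg hμp.le] at h5
    have h6 := P.le_opNorm (xh - x)
    have h7 := taylor_grad hH hL hlip hxball hxhb
    have h8 := norm_sub_le e (proxPt φ (xh - gradient f xh) - proxPt φ (xh - gradient f x - G (xh - x)))
    rw [← h1] at h8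
    have b2 : L * ‖xh - x‖ ^ 2 ≤ L * C2 ^ 2 * (t * s) := by
      calc L * ‖xh - x‖ ^ 2 ≤ L * (C2 * t) ^ 2 := by gcongr
        _ = L * C2 ^ 2 * (t * t) := by ring
        _ ≤ _ := by gcongr
    have b3 : (‖P‖ + μ) * ‖xh - x‖ ≤ cP * D * C2 * (t * s) + νbar * C2 * (t * s) := by
      calc (‖P‖ + μ) * ‖xh - x‖ ≤ (cP * (D * t) + νbar * s) * (C2 * t) := by gcongr
        _ = cP * D * C2 * (t * t) + νbar * C2 * (t * s) := by ring
        _ ≤ _ := by gcongr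
    set Z := r ^ min (1 + τ) (δ + q)
    have hZ : 0 ≤ Z := Real.rpow_nonneg hrp.le _
    have b4 : (L * C2 ^ 2 + cP * D * C2 + νbar * C2) * (t * s) ≤ (L * C2 ^ 2 + cP * D * C2 + νbar * C2) * Z := by
      gcongr
    have b5 : C3 * Z ≤ (C2 + (2 + MG) + C3) * Z := by gcongr; linarith
    rw [hC3] at b5 ⊢
    linarith

theorem seq_conv {n : ℕ} {x : ℕ → EuclideanSpace ℝ (Fin n)} {rr : EuclideanSpace ℝ (Fin n) → ℝ}
    (hrr : ∀ y, 0 ≤ rr y) {xs : EuclideanSpace ℝ (Fin n)} (hr0 : Tendsto rr (nhds xs) (nhds 0))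
    {K : Set ℕ} (hacc : MapClusterPt xs (atTop ⊓ 𝓟 K) x) {C η q : ℝ} (hC : 0 < C) (hη : 0 < η)
    (hη1 : η < 1) (hq : 0 < q) {Q : ℕ → Prop}
    (hstep : ∀ᶠ y in nhds xs, ∀ k ∈ K, x k = y →
      k + 1 ∈ K ∧ ‖x (k + 1) - x k‖ ≤ C * rr (x k) ^ q ∧ rr (x (k + 1)) ≤ η * rr (x k) ∧ Q k) :
    Tendsto x atTop (nhds xs) ∧ ∃ k₀, ∀ k ≥ k₀, Q k := by
  obtain ⟨ε, hε, hball⟩ := Metric.eventually_nhds_iff.mp hstep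
  have hηq : η ^ q < 1 := Real.rpow_lt_one hη.le hη1 hq
  obtain ⟨C', hC'⟩ : ∃ C', C' = C / (1 - η ^ q) := ⟨_, rfl⟩
  have h1η : 0 < 1 - η ^ q := by linarith
  have hC'p : 0 < C' := by rw [hC']; positivity
  have hCC : C + C' * η ^ q = C' := by rw [hC']; field_simp; ring
  have hΦ : Tendsto (fun y => ‖y - xs‖ + C' * rr y ^ q) (nhds xs) (nhds 0) := by
    have h1 : Tendsto (fun y => ‖y - xs‖) (nhds xs) (nhds 0) := by
      have : Continuous fun y => ‖y - xs‖ := by fun_prop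
      simpa using this.tendsto xs
    have h2 := (hr0.rpow_const (p := q) (Or.inr hq.le)).const_mul C'
    rw [Real.zero_rpow hq.ne', mul_zero] at h2
    simpa using h1.add h2
  have main : ∀ ε' > 0, ε' ≤ ε → ∃ k₀, ∀ k ≥ k₀, k ∈ K ∧ ‖x k - xs‖ + C' * rr (x k) ^ q < ε' := by
    intro ε' hε' hle
    have ev := hΦ.eventually_lt_const hε'
    have hfr := (mapClusterPt_iff_frequently.mp hacc) _ ev
    have hfr2 := hfr.and_eventually (eventually_inf_principal.mpr (Eventually.of_forall fun _ h => h))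
    obtain ⟨k, hk1, hk2⟩ := hfr2.exists
    refine ⟨k, fun j hj => ?_⟩
    induction j, hj using Nat.le_induction with
    | base => exact ⟨hk2, hk1⟩
    | succ j hj ih =>
      obtain ⟨hK, hlt⟩ := ih
      have hnn : 0 ≤ C' * rr (x j) ^ q := by have := Real.rpow_nonneg (hrr (x j)) q; positivity
      obtain ⟨a1, a2, a3, -⟩ := hball (y := x j) (by rw [dist_eq_norm]; linarith) j hK rfl
      refine ⟨a1, ?_⟩
      have h1 : x (j + 1) - xs = (x (j + 1) - x j) + (x j - xs) := by abel
      have h2 := norm_add_le (x (j + 1) - x j) (x j - xs)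
      rw [← h1] at h2
      have h3 : rr (x (j + 1)) ^ q ≤ η ^ q * rr (x j) ^ q := by
        rw [← Real.mul_rpow hη.le (hrr _)]
        exact Real.rpow_le_rpow (hrr _) a3 hq.le
      have h4 : C' * rr (x (j + 1)) ^ q ≤ C' * (η ^ q * rr (x j) ^ q) := by gcongr
      have h5 : C * rr (x j) ^ q + C' * (η ^ q * rr (x j) ^ q) = C' * rr (x j) ^ q := by
        conv_rhs => rw [← hCC]
        ring
      linarith
  have hnn : ∀ j, 0 ≤ C' * rr (x j) ^ q := fun j => by
    have := Real.rpow_nonneg (hrr (x j)) q; positivity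
  constructor
  · rw [Metric.tendsto_atTop]
    intro e he
    obtain ⟨k₀, h⟩ := main (min e ε) (lt_min he hε) (min_le_right _ _)
    refine ⟨k₀, fun k hk => ?_⟩
    have h1 := (h k hk).2
    have h2 := hnn k
    rw [dist_eq_norm]
    have := min_le_left e ε
    linarith
  · obtain ⟨k₀, h⟩ := main ε hε le_rfl
    refine ⟨k₀, fun k hk => ?_⟩
    have h1 := (h k hk).2
    have h2 := hnn k
    exact (hball (y := x k) (by rw [dist_eq_norm]; linarith) k (h k hk).1 rfl).2.2.2

set_option maxHeartbeats 4000000 in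
/-- Theorem 5.7 (local convergence): under the local assumptions, the whole sequence `{xᵏ}`
converges to `x*`, and `{‖r(xᵏ)‖}` converges to `0` with convergence order
`ρ = min{1+τ, δ+q} > 1`: there exist `C > 0` and `k₀` with
`‖r(x^{k+1})‖ ≤ C‖r(xᵏ)‖^ρ` for all `k ≥ k₀`. -/
theorem stmt_18 {n m : ℕ}
    -- problem data: f(x) = ψ(Ax − b), F = f + φ bounded below, φ convex, ψ C²
    (ψ : EuclideanSpace ℝ (Fin m) → ℝ)
    (A : EuclideanSpace ℝ (Fin n) →L[ℝ] EuclideanSpace ℝ (Fin m))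
    (b : EuclideanSpace ℝ (Fin m))
    (φ : EuclideanSpace ℝ (Fin n) → ℝ)
    (hψ : ContDiff ℝ 2 ψ) (hφ : ConvexOn ℝ Set.univ φ)
    (f F : EuclideanSpace ℝ (Fin n) → ℝ)
    (hf : ∀ y, f y = ψ (A y - b)) (hF : ∀ y, F y = f y + φ y)
    (hFbdd : BddBelow (Set.range F))
    -- algorithm parameters
    (c₁ c₂ σ₁ σ₂ η θ α a νmin ν₀ νbar δ τ pmin κ : ℝ)
    (hc₁ : 0 < c₁) (hc₁' : c₁ < 1) (hc₂ : c₁ < c₂) (hc₂' : c₂ < 1)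
    (hσ₁ : 0 < σ₁) (hσ₁' : σ₁ < 1) (hσ₂ : 1 < σ₂)
    (hη : 0 < η) (hη' : η < 1) (hθ : 0 < θ) (hθ' : θ < 1)
    (hα : 0 < α) (hα' : α < 1) (ha : 1 ≤ a)
    (hνmin : 0 < νmin) (hν₀a : νmin ≤ ν₀) (hν₀b : ν₀ ≤ νbar)
    (hδ0 : 0 < δ) (hδ1 : δ ≤ 1) (hτ : δ ≤ τ)
    (hpmin : 0 < pmin) (hpmin' : pmin < 1 / 2) (hκ : 1 + δ < κ)
    -- iterates and regularization sequences
    (x xhat : ℕ → EuclideanSpace ℝ (Fin n)) (ν rbar μ : ℕ → ℝ)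
    (hν0 : ν 0 = ν₀) (hrbar0 : rbar 0 = ‖resid f φ (x 0)‖)
    (hμ : ∀ k, μ k = ν k * rbar k ^ δ)
    -- Λ_k, H_k + μ_k I =: G_k, the models q_k, q̂_k, and the subproblem residual R_k
    (Λ : ℕ → ℝ)
    (hΛ : ∀ k, Λ k = a * max (-(lambdaMin (fderiv ℝ (gradient ψ) (A (x k) - b)))) 0)
    (G : ℕ → EuclideanSpace ℝ (Fin n) →L[ℝ] EuclideanSpace ℝ (Fin n))
    (hG : ∀ k, G k = fderiv ℝ (gradient f) (x k)
        + Λ k • ((ContinuousLinearMap.adjoint A).comp A)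
        + μ k • ContinuousLinearMap.id ℝ (EuclideanSpace ℝ (Fin n)))
    (q qhat : ℕ → EuclideanSpace ℝ (Fin n) → ℝ)
    (hq : ∀ k y, q k y = f (x k) + ⟪gradient f (x k), y - x k⟫
        + (1 / 2) * ⟪y - x k, (fderiv ℝ (gradient f) (x k)) (y - x k)⟫ + φ y)
    (hqhat : ∀ k y, qhat k y = f (x k) + ⟪gradient f (x k), y - x k⟫
        + (1 / 2) * ⟪y - x k, (G k) (y - x k)⟫ + φ y)
    (R : ℕ → EuclideanSpace ℝ (Fin n) → EuclideanSpace ℝ (Fin n))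
    (hR : ∀ k y, R k y = y - proxPt φ (y - gradient f (x k) - (G k) (y - x k)))
    -- the inexactness criteria satisfied by x̂ᵏ
    (hinex1 : ∀ k, ‖R k (xhat k)‖ ≤
        θ * min ‖resid f φ (x k)‖ (‖resid f φ (x k)‖ ^ (1 + τ)))
    (hinex2 : ∀ k, α * μ k / 2 * ‖xhat k - x k‖ ^ 2 ≤ F (x k) - qhat k (xhat k))
    -- dᵏ, pred_k, ared_k, ρ_k
    (d : ℕ → EuclideanSpace ℝ (Fin n)) (hd : ∀ k, d k = xhat k - x k)
    (pred ared ρ : ℕ → ℝ)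
    (hpred : ∀ k, pred k = F (x k) - q k (xhat k))
    (hared : ∀ k, ared k = F (x k) - F (xhat k))
    (hρ : ∀ k, ρ k = ared k / pred k)
    -- update rules (unsuccessful / successful / highly successful iterations)
    (unsucc : ℕ → Prop)
    (hunsucc : ∀ k, unsucc k ↔
        pred k ≤ pmin * (1 - θ) * ‖d k‖ *
          min ‖resid f φ (x k)‖ (‖resid f φ (x k)‖ ^ κ) ∨ ρ k ≤ c₁)
    (hupd : ∀ k,
        (unsucc k → x (k + 1) = x k ∧ ν (k + 1) = σ₂ * ν k) ∧
        (¬unsucc k → x (k + 1) = xhat k ∧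
          (ρ k ≤ c₂ → ν (k + 1) = min (ν k) νbar) ∧
          (c₂ < ρ k → ν (k + 1) = min (max (σ₁ * ν k) νmin) νbar)))
    (hrbarupd : ∀ k,
        (‖resid f φ (x (k + 1))‖ ≤ η * rbar k → rbar (k + 1) = ‖resid f φ (x (k + 1))‖) ∧
        (¬‖resid f φ (x (k + 1))‖ ≤ η * rbar k → rbar (k + 1) = rbar k))
    -- no iterate is stationary (otherwise the algorithm terminates)
    (hrne : ∀ k, resid f φ (x k) ≠ 0)
    -- the index set K
    (K : Set ℕ)
    (hK : K = {0} ∪ {k | 1 ≤ k ∧ ‖resid f φ (x k)‖ ≤ η * rbar (k - 1)})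
    -- local assumptions: X* = set of strongly stationary points, x* an accumulation
    -- point of {xᵏ}_{k∈K} lying in X*
    (Xstar : Set (EuclideanSpace ℝ (Fin n)))
    (hXstar : Xstar = {y | -gradient f y ∈ subdiff φ y ∧
        ∀ u, 0 ≤ ⟪(fderiv ℝ (gradient ψ) (A y - b)) u, u⟫})
    (hXne : Xstar.Nonempty)
    (xstar : EuclideanSpace ℝ (Fin n)) (hxstar : xstar ∈ Xstar)
    (hacc : MapClusterPt xstar (atTop ⊓ 𝓟 K) x)
    -- local Lipschitz continuity of ∇²ψ near x*
    (ε Lψ : ℝ) (hε : 0 < ε) (hLψ : 0 < Lψ)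
    (hlipψ : ∀ u ∈ closedBall xstar ε, ∀ v ∈ closedBall xstar ε,
      ‖fderiv ℝ (gradient ψ) (A u - b) - fderiv ℝ (gradient ψ) (A v - b)‖ ≤ Lψ * ‖A u - A v‖)
    -- Hölderian local error bound of order qq on X*
    (β qq : ℝ) (hβ : 0 < β) (hqq : max δ (1 - δ) < qq)
    (herrbd : ∀ y ∈ closedBall xstar ε, β * infDist y Xstar ≤ ‖resid f φ y‖ ^ qq)
    -- derived constants: ε₀, L = ‖A‖³Lψ, and a Lipschitz constant L_g of ∇f on B_{ε₀}(x*)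
    (ε₀ L Lg : ℝ) (hε₀ : ε₀ = min ε (ε / ‖A‖)) (hL : L = ‖A‖ ^ 3 * Lψ) (hLg : 0 < Lg)
    (hlipg : ∀ u ∈ closedBall xstar ε₀, ∀ v ∈ closedBall xstar ε₀,
      ‖gradient f u - gradient f v‖ ≤ Lg * ‖u - v‖)
    :
    Tendsto x atTop (nhds xstar) ∧
    1 < min (1 + τ) (δ + qq) ∧
    Tendsto (fun k => ‖resid f φ (x k)‖) atTop (nhds 0) ∧
    ∃ C > (0 : ℝ), ∃ k₀ : ℕ, ∀ k ≥ k₀,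
      ‖resid f φ (x (k + 1))‖ ≤ C * ‖resid f φ (x k)‖ ^ min (1 + τ) (δ + qq) := by
  have hq1 : δ < qq := lt_of_le_of_lt (le_max_left _ _) hqq
  have hq2 : 1 - δ < qq := lt_of_le_of_lt (le_max_right _ _) hqq
  have hρ1 : 1 < min (1 + τ) (δ + qq) := lt_min (by linarith) (by linarith)
  have hgrad : ∀ y, HasGradientAt f (gradient f y) y := fun y => by
    have h := grad_comp hψ hf y
    rwa [← h.gradient] at h
  obtain ⟨H, hHdef⟩ : ∃ H : EuclideanSpace ℝ (Fin n) → EuclideanSpace ℝ (Fin n) →L[ℝ] EuclideanSpace ℝ (Fin n),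
      ∀ y, H y = (ContinuousLinearMap.adjoint A).comp ((fderiv ℝ (gradient ψ) (A y - b)).comp A) :=
    ⟨_, fun _ => rfl⟩
  have hH : ∀ y, HasFDerivAt (gradient f) (H y) y := fun y => by
    rw [hHdef]; exact hess_comp hψ hf y
  have hHf : ∀ y, fderiv ℝ (gradient f) y = H y := fun y => (hH y).fderiv
  have hL0 : 0 ≤ L := by rw [hL]; positivity
  have hadj : ‖ContinuousLinearMap.adjoint A‖ = ‖A‖ := by
    exact LinearIsometryEquiv.norm_map _ A
  have hlipH : ∀ u ∈ closedBall xstar ε, ∀ v ∈ closedBall xstar ε, ‖H u - H v‖ ≤ L * ‖u - v‖ := by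
    intro u hu v hv
    have h1 : H u - H v = (ContinuousLinearMap.adjoint A).comp
        ((fderiv ℝ (gradient ψ) (A u - b) - fderiv ℝ (gradient ψ) (A v - b)).comp A) := by
      rw [hHdef, hHdef]; ext1 w; simp
    have h2 := hlipψ u hu v hv
    have h3 : ‖A u - A v‖ ≤ ‖A‖ * ‖u - v‖ := by rw [← map_sub]; exact A.le_opNorm _
    rw [h1]
    calc _ ≤ ‖ContinuousLinearMap.adjoint A‖ * (‖fderiv ℝ (gradient ψ) (A u - b) - fderiv ℝ (gradient ψ) (A v - b)‖ * ‖A‖) := by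
          refine (ContinuousLinearMap.opNorm_comp_le _ _).trans ?_
          gcongr
          exact ContinuousLinearMap.opNorm_comp_le _ _
      _ ≤ ‖A‖ * ((Lψ * (‖A‖ * ‖u - v‖)) * ‖A‖) := by
          rw [hadj]
          gcongr
          exact h2.trans (by gcongr)
      _ = L * ‖u - v‖ := by rw [hL]; ring
  have hS : ∀ y ∈ Xstar, -gradient f y ∈ subdiff φ y := fun y hy => by
    rw [hXstar] at hy; exact hy.1
  have hSpsd : ∀ y ∈ Xstar, ∀ u, 0 ≤ ⟪(fderiv ℝ (gradient ψ) (A y - b)) u, u⟫ := fun y hy => by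
    rw [hXstar] at hy; exact hy.2
  have hνb : νmin ≤ νbar := hν₀a.trans hν₀b
  have ha0 : 0 < a := by linarith
  have hcP : 0 ≤ a * Lψ * ‖A‖ ^ 3 := by positivity
  obtain ⟨⟨K0, hK0, hrK0⟩, C, hC, hcore⟩ := core_step hφ hgrad hH hε hL0 hlipH hS hxstar hβ hδ0 hq1 hτ hνmin
    hνb hθ hθ' hcP herrbd
  have hr0 : Tendsto (fun y => ‖resid f φ y‖) (nhds xstar) (nhds 0) := by
    have h1 : Tendsto (fun y => K0 * ‖y - xstar‖) (nhds xstar) (nhds 0) := by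
      have : Continuous fun y => K0 * ‖y - xstar‖ := by fun_prop
      simpa using this.tendsto xstar
    refine squeeze_zero' (Eventually.of_forall fun _ => norm_nonneg _) ?_ h1
    filter_upwards [closedBall_mem_nhds xstar hε] with y hy using hrK0 y hy
  have hpow : ∀ p : ℝ, 0 < p → Tendsto (fun y => ‖resid f φ y‖ ^ p) (nhds xstar) (nhds 0) := by
    intro p hp
    have := hr0.rpow_const (p := p) (Or.inr hp.le)
    rwa [Real.zero_rpow hp.ne'] at this
  have hrpos : ∀ k, 0 < ‖resid f φ (x k)‖ := fun k => norm_pos_iff.mpr (hrne k)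
  have hνlow : ∀ k, νmin ≤ ν k := by
    intro k
    induction k with
    | zero => rw [hν0]; exact hν₀a
    | succ k ih =>
      by_cases hu : unsucc k
      · rw [((hupd k).1 hu).2]
        exact ih.trans (le_mul_of_one_le_left (hνmin.le.trans ih) hσ₂.le)
      · obtain ⟨-, h1, h2⟩ := (hupd k).2 hu
        rcases le_or_gt (ρ k) c₂ with h | h
        · rw [h1 h]; exact le_min ih hνb
        · rw [h2 h]; exact le_min (le_max_right _ _) hνb
  have hrbarK : ∀ k ∈ K, rbar k = ‖resid f φ (x k)‖ := by
    intro k hk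
    rw [hK] at hk
    rcases hk with h | ⟨h1, h2⟩
    · rw [Set.mem_singleton_iff.mp h]; exact hrbar0
    · obtain ⟨j, rfl⟩ : ∃ j, k = j + 1 := ⟨k - 1, by omega⟩
      exact (hrbarupd j).1 h2
  have hrlow : ∀ k, η * rbar k < ‖resid f φ (x k)‖ := by
    intro k
    cases k with
    | zero => rw [hrbar0]; exact mul_lt_of_lt_one_left (hrpos 0) hη'
    | succ j =>
      by_cases h : ‖resid f φ (x (j + 1))‖ ≤ η * rbar j
      · rw [(hrbarupd j).1 h]; exact mul_lt_of_lt_one_left (hrpos (j + 1)) hη'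
      · rw [(hrbarupd j).2 h]; exact not_le.mp h
  have hνup : ∀ k ∈ K, ν k ≤ νbar := by
    intro k hk
    rw [hK] at hk
    rcases hk with h | ⟨h1, h2⟩
    · rw [Set.mem_singleton_iff.mp h, hν0]; exact hν₀b
    · obtain ⟨j, rfl⟩ : ∃ j, k = j + 1 := ⟨k - 1, by omega⟩
      have h2' : ‖resid f φ (x (j + 1))‖ ≤ η * rbar j := h2
      have hu : ¬ unsucc j := by
        intro hu
        rw [((hupd j).1 hu).1] at h2'
        have := hrlow j
        linarith
      obtain ⟨-, h3, h4⟩ := (hupd j).2 hu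
      rcases le_or_gt (ρ j) c₂ with h | h
      · rw [h3 h]; exact min_le_right _ _
      · rw [h4 h]; exact min_le_right _ _
  have hstep : ∀ᶠ y in nhds xstar, ∀ k ∈ K, x k = y →
      k + 1 ∈ K ∧ ‖x (k + 1) - x k‖ ≤ C * ‖resid f φ (x k)‖ ^ qq ∧
      ‖resid f φ (x (k + 1))‖ ≤ η * ‖resid f φ (x k)‖ ∧
      ‖resid f φ (x (k + 1))‖ ≤ C * ‖resid f φ (x k)‖ ^ min (1 + τ) (δ + qq) := by
    have ev1 : ∀ᶠ y in nhds xstar, ‖resid f φ y‖ ^ (min (1 + τ) (δ + qq) - 1) < η / C :=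
      (hpow _ (by linarith)).eventually_lt_const (by positivity)
    have ev2 : ∀ᶠ y in nhds xstar, ‖resid f φ y‖ ^ (κ - (1 + δ)) < νmin / 2 / (C * pmin) :=
      (hpow _ (by linarith)).eventually_lt_const (by positivity)
    have ev3 : ∀ᶠ y in nhds xstar, ‖resid f φ y‖ ^ (qq - δ) < (1 - c₁) * νmin / 2 / ((L + 1) * C) :=
      (hpow _ (by linarith)).eventually_lt_const (by
        have : 0 < 1 - c₁ := by linarith
        positivity)
    filter_upwards [hcore, closedBall_mem_nhds xstar hε, ev1, ev2, ev3] with y hy hyb hy1 hy2 hy3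
    intro k hk hxy
    subst hxy
    set r := ‖resid f φ (x k)‖ with hr
    have hrp : 0 < r := hrpos k
    have hΛ0 : 0 ≤ Λ k := by rw [hΛ]; positivity
    set s := r ^ δ with hs
    have hsp : 0 < s := Real.rpow_pos_of_pos hrp δ
    have hμk : μ k = ν k * s := by rw [hμ, hrbarK k hk]
    have hμ1 : νmin * s ≤ μ k := by rw [hμk]; have := hνlow k; gcongr
    have hμ2 : μ k ≤ νbar * s := by rw [hμk]; have := hνup k hk; gcongr
    obtain ⟨P, hPdef⟩ : ∃ P, P = Λ k • ((ContinuousLinearMap.adjoint A).comp A) := ⟨_, rfl⟩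
    have hPin : ∀ v, ⟪P v, v⟫ = Λ k * ‖A v‖ ^ 2 := by
      intro v
      rw [hPdef]
      simp only [smul_apply, ContinuousLinearMap.comp_apply, real_inner_smul_left,
        ContinuousLinearMap.adjoint_inner_left, real_inner_self_eq_norm_sq]
    have hPb : ∀ xb ∈ Xstar, xb ∈ closedBall xstar ε → ‖P‖ ≤ a * Lψ * ‖A‖ ^ 3 * ‖x k - xb‖ := by
      intro xb hxb hxbb
      have h1 := neg_lambdaMin_le (fderiv ℝ (gradient ψ) (A (x k) - b)) (fderiv ℝ (gradient ψ) (A xb - b)) (hSpsd xb hxb)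
      have h2 := hlipψ (x k) hyb xb hxbb
      have h3 : ‖A (x k) - A xb‖ ≤ ‖A‖ * ‖x k - xb‖ := by rw [← map_sub]; exact A.le_opNorm _
      have h4 : Λ k ≤ a * (Lψ * (‖A‖ * ‖x k - xb‖)) := by
        rw [hΛ]
        gcongr
        refine max_le (h1.trans (h2.trans (by gcongr))) (by positivity)
      rw [hPdef, norm_smul, Real.norm_of_nonneg hΛ0]
      have h5 : ‖(ContinuousLinearMap.adjoint A).comp A‖ ≤ ‖A‖ * ‖A‖ := by
        have := ContinuousLinearMap.opNorm_comp_le (ContinuousLinearMap.adjoint A) A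
        rwa [hadj] at this
      calc _ ≤ (a * (Lψ * (‖A‖ * ‖x k - xb‖))) * (‖A‖ * ‖A‖) := by gcongr
        _ = _ := by ring
    have hpsd : ∀ v, 0 ≤ ⟪(H (x k) + P) v, v⟫ := by
      intro v
      rw [add_apply, inner_add_left, hPin, hHdef]
      simp only [ContinuousLinearMap.comp_apply, ContinuousLinearMap.adjoint_inner_left]
      have h1 := lambdaMin_le (fderiv ℝ (gradient ψ) (A (x k) - b)) (A v)
      have h2 : -lambdaMin (fderiv ℝ (gradient ψ) (A (x k) - b)) ≤ Λ k := by
        rw [hΛ]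
        have h3 := le_max_left (-lambdaMin (fderiv ℝ (gradient ψ) (A (x k) - b))) 0
        have h4 := le_max_right (-lambdaMin (fderiv ℝ (gradient ψ) (A (x k) - b))) 0
        exact h3.trans (le_mul_of_one_le_left h4 ha)
      have h5 : 0 ≤ ‖A v‖ ^ 2 := by positivity
      have h6 := mul_le_mul_of_nonneg_right h2 h5
      linarith
    have hGk : G k = H (x k) + P + μ k • ContinuousLinearMap.id ℝ (EuclideanSpace ℝ (Fin n)) := by
      rw [hG, hHf, hPdef]
    have hin := hinex1 k
    rw [hR] at hin
    obtain ⟨k1, k2, k3, k4⟩ := hy (hrne k) (xhat k) P (G k) (μ k) hGk hPb hpsd hμ1 hμ2 hin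
    obtain ⟨D, hD⟩ : ∃ D, D = ‖xhat k - x k‖ := ⟨_, rfl⟩
    rw [← hD] at k1 k2 k4
    have hDp : 0 < D := by
      have : 0 < C * D := lt_of_lt_of_le (mul_pos (by linarith) hrp) k2
      exact pos_of_mul_pos_right this hC.le
    have hpredlow : νmin / 2 * s * D ^ 2 ≤ pred k := by
      have h1 := hinex2 k
      rw [hqhat, hF] at h1
      rw [hpred, hq, hF, hHf]
      have h2 : ⟪xhat k - x k, G k (xhat k - x k)⟫ = ⟪xhat k - x k, H (x k) (xhat k - x k)⟫
          + Λ k * ‖A (xhat k - x k)‖ ^ 2 + μ k * D ^ 2 := by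
        rw [hGk, add_apply, add_apply, inner_add_right, inner_add_right, real_inner_comm (P _), hPin,
          smul_apply, ContinuousLinearMap.id_apply, real_inner_smul_right, real_inner_self_eq_norm_sq, hD]
      rw [h2, ← hD] at h1
      have h3 : 0 ≤ Λ k * ‖A (xhat k - x k)‖ ^ 2 := by positivity
      have hμ0 : 0 ≤ μ k := le_trans (by positivity) hμ1
      have h4 : 0 ≤ α * μ k / 2 * D ^ 2 := by positivity
      have h5 : νmin * s * D ^ 2 ≤ μ k * D ^ 2 := by gcongr
      linarith
    have hpredpos : 0 < pred k := lt_of_lt_of_le (by positivity) hpredlow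
    have hsucc : ¬ unsucc k := by
      rw [hunsucc, not_or, not_le, not_le]
      constructor
      · rw [hd, ← hD]
        set u := r ^ (κ - (1 + δ)) with hu
        have hrk : r ^ κ = r * s * u := by
          have : κ = 1 + δ + (κ - (1 + δ)) := by ring
          rw [this, Real.rpow_add hrp, Real.rpow_add hrp, Real.rpow_one]
        have hu2 : u * (C * pmin) < νmin / 2 := (lt_div_iff₀ (by positivity)).mp hy2
        have hmin : min r (r ^ κ) ≤ r * s * u := by rw [← hrk]; exact min_le_right _ _
        have h1θ : 0 < 1 - θ := by linarith
        refine lt_of_lt_of_le ?_ hpredlow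
        calc pmin * (1 - θ) * D * min r (r ^ κ) ≤ pmin * (1 - θ) * D * (r * s * u) := by gcongr
          _ = pmin * u * D * s * ((1 - θ) * r) := by ring
          _ ≤ pmin * u * D * s * (C * D) := by
            have : 0 ≤ u := Real.rpow_nonneg hrp.le _
            gcongr
          _ = (u * (C * pmin)) * (s * D ^ 2) := by ring
          _ < νmin / 2 * (s * D ^ 2) := by gcongr
          _ = _ := by ring
      · rw [hρ, lt_div_iff₀ hpredpos]
        have hdiff : pred k - ared k ≤ L * D ^ 3 := by
          have h1 := (abs_le.mp k4).2
          rw [hpred, hared, hq, hF, hF, hHf]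
          linarith
        set v := r ^ (qq - δ) with hv
        have hvp : 0 ≤ v := Real.rpow_nonneg hrp.le _
        have hqv : r ^ qq = s * v := by
          rw [hs, hv, ← Real.rpow_add hrp]; congr 1; ring
        rw [hqv] at k1
        have hv2 : v * ((L + 1) * C) < (1 - c₁) * νmin / 2 := (lt_div_iff₀ (by positivity)).mp hy3
        have h1 : L * D ^ 3 < (1 - c₁) * pred k := by
          calc L * D ^ 3 = L * D * D ^ 2 := by ring
            _ ≤ (L + 1) * (C * (s * v)) * D ^ 2 := by gcongr; linarith
            _ = (v * ((L + 1) * C)) * (s * D ^ 2) := by ring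
            _ < ((1 - c₁) * νmin / 2) * (s * D ^ 2) := by gcongr
            _ = (1 - c₁) * (νmin / 2 * s * D ^ 2) := by ring
            _ ≤ _ := by
              have : 0 ≤ 1 - c₁ := by linarith
              gcongr
        linarith
    have hxk : x (k + 1) = xhat k := ((hupd k).2 hsucc).1
    have hη3 : ‖resid f φ (x (k + 1))‖ ≤ η * r := by
      rw [hxk]
      refine k3.trans ?_
      have h1 : r ^ min (1 + τ) (δ + qq) = r * r ^ (min (1 + τ) (δ + qq) - 1) := by
        conv_lhs => rw [show min (1 + τ) (δ + qq) = 1 + (min (1 + τ) (δ + qq) - 1) by ring]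
        rw [Real.rpow_add hrp, Real.rpow_one]
      have h2 := (lt_div_iff₀ hC).mp hy1
      rw [h1]
      calc C * (r * r ^ (min (1 + τ) (δ + qq) - 1)) = (r ^ (min (1 + τ) (δ + qq) - 1) * C) * r := by ring
        _ ≤ η * r := by gcongr
    refine ⟨?_, ?_, hη3, ?_⟩
    · rw [hK]
      right
      refine ⟨by omega, ?_⟩
      rw [Nat.add_sub_cancel, hrbarK k hk]
      exact hη3
    · rw [hxk, ← hD]; exact k1
    · rw [hxk]; exact k3
  obtain ⟨hconv, hk0⟩ := seq_conv (fun y => norm_nonneg (resid f φ y)) hr0 hacc hC hη hη'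
    (by linarith) hstep
  exact ⟨hconv, hρ1, hr0.comp hconv, C, hC, hk0⟩
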